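/- For all n, k ∈ ℕ, every labelled sequent derivable in the labelled calculus G3DS_n^k is derivable in the refined labelled calculus DS_n^k L. -/

import Mathlib

/-!
Labelled sequent calculi for deontic STIT logics `DS_n^k`.
-/

namespace DeonticStit

/-- Deontic STIT formulae in negation normal form, with agents in `Fin (n+1)`:
literals `p`, `p̄` and the connectives `∨`, `∧`, `□`, `◇`, `[i]`, `⟨i⟩`,
`⊗_i`, `⊖_i`. -/
inductive SFml (n : ℕ) : Type
  | pos : ℕ → SFml n
  | neg : ℕ → SFml n
  | or  : SFml n → SFml n → SFml n
  | and : SFml n → SFml n → SFml n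
  | box : SFml n → SFml n
  | dia : SFml n → SFml n
  | abox : Fin (n + 1) → SFml n → SFml n
  | adia : Fin (n + 1) → SFml n → SFml n
  | obl : Fin (n + 1) → SFml n → SFml n
  | per : Fin (n + 1) → SFml n → SFml n

/-- Multisets of relational atoms `R_[i] w u`. -/
abbrev RAt (n : ℕ) : Type := Multiset (Fin (n + 1) × ℕ × ℕ)

/-- Multisets of deontic atoms `I_{⊗_i} u`. -/
abbrev DAt (n : ℕ) : Type := Multiset (Fin (n + 1) × ℕ)

/-- Multisets of labelled formulae `w : φ`. -/
abbrev SSeq (n : ℕ) : Type := Multiset (ℕ × SFml n)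

/-- The label `v` occurs in the labelled sequent `RA, IA ⊢ Γ`. -/
def soccurs {n : ℕ} (v : ℕ) (RA : RAt n) (IA : DAt n) (Γ : SSeq n) : Prop :=
  (∃ i w u, (i, w, u) ∈ RA ∧ (v = w ∨ v = u)) ∨ (∃ i, (i, v) ∈ IA) ∨ ∃ φ, (v, φ) ∈ Γ

/-- Undirected `i`-paths: `IPath RA i w u` holds iff `w = u` or there is a
sequence of atoms, each of the form `R_[i] v z` or `R_[i] z v`, linking `w`
to `u`. -/
inductive IPath {n : ℕ} (RA : RAt n) (i : Fin (n + 1)) : ℕ → ℕ → Prop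
  | refl (w : ℕ) : IPath RA i w w
  | fwd {w u v : ℕ} : (i, w, u) ∈ RA → IPath RA i u v → IPath RA i w v
  | bwd {w u v : ℕ} : (i, u, w) ∈ RA → IPath RA i u v → IPath RA i w v

/-- The negation-normal-form negation `φ̄` of a deontic STIT formula. -/
def SFml.negnnf {n : ℕ} : SFml n → SFml n
  | SFml.pos p => SFml.neg p
  | SFml.neg p => SFml.pos p
  | SFml.or φ ψ => SFml.and φ.negnnf ψ.negnnf
  | SFml.and φ ψ => SFml.or φ.negnnf ψ.negnnf
  | SFml.box φ => SFml.dia φ.negnnf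
  | SFml.dia φ => SFml.box φ.negnnf
  | SFml.abox i φ => SFml.adia i φ.negnnf
  | SFml.adia i φ => SFml.abox i φ.negnnf
  | SFml.obl i φ => SFml.per i φ.negnnf
  | SFml.per i φ => SFml.obl i φ.negnnf

/-- Substitution of the label `w` for the label `u`. -/
def substLbl (w u v : ℕ) : ℕ := if v = u then w else v

/-- Label substitution on relational atoms. -/
def substRAt {n : ℕ} (w u : ℕ) (RA : RAt n) : RAt n :=
  RA.map fun t => (t.1, substLbl w u t.2.1, substLbl w u t.2.2)

/-- Label substitution on deontic atoms. -/
def substDAt {n : ℕ} (w u : ℕ) (IA : DAt n) : DAt n :=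
  IA.map fun t => (t.1, substLbl w u t.2)

/-- Label substitution on labelled formulae. -/
def substSSeq {n : ℕ} (w u : ℕ) (Γ : SSeq n) : SSeq n :=
  Γ.map fun t => (substLbl w u t.1, t.2)

/-- Gated labelled sequent calculi for deontic STIT logics.  The rules `(id)`,
`(∨r)`, `(∧r)`, `(◇)`, `(□)`, `([i])`, `(⊗_i)`, `(IOA)` and (for `k > 0`)
`(APC_i^k)` are always present; the propagation rules `(Pr_⟨i⟩)`, `(Pr_⊖i¹)`,
`(Pr_⊖i²)` are present exactly when the gate `gR` holds; the rules `(⟨i⟩)`,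
`(⊖_i)` and the structural rules `(ref_i)`, `(euc_i)`, `(D2^i)`, `(D3^i)` are
present exactly when the gate `gG` holds; and the rules of `Str(DS)` (label
substitution, weakening, contractions, cut) are present exactly when the gate
`gS` holds.  In particular `SDer n k False True False` is `G3DS_n^k`,
`SDer n k True False False` is `DS_n^k L`, and `SDer n k True False True` is
`DS_n^k L + Str(DS)`. -/
inductive SDer (n k : ℕ) (gR gG gS : Prop) : RAt n → DAt n → SSeq n → Prop
  | id (RA : RAt n) (IA : DAt n) (Γ : SSeq n) (w p : ℕ) :
      SDer n k gR gG gS RA IA ((w, SFml.pos p) ::ₘ (w, SFml.neg p) ::ₘ Γ)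
  | orr {RA : RAt n} {IA : DAt n} {Γ : SSeq n} {w : ℕ} {φ ψ : SFml n} :
      SDer n k gR gG gS RA IA ((w, φ) ::ₘ (w, ψ) ::ₘ Γ) →
      SDer n k gR gG gS RA IA ((w, SFml.or φ ψ) ::ₘ Γ)
  | andr {RA : RAt n} {IA : DAt n} {Γ : SSeq n} {w : ℕ} {φ ψ : SFml n} :
      SDer n k gR gG gS RA IA ((w, φ) ::ₘ Γ) →
      SDer n k gR gG gS RA IA ((w, ψ) ::ₘ Γ) →
      SDer n k gR gG gS RA IA ((w, SFml.and φ ψ) ::ₘ Γ)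
  | diar {RA : RAt n} {IA : DAt n} {Γ : SSeq n} {w u : ℕ} {φ : SFml n} :
      SDer n k gR gG gS RA IA ((w, SFml.dia φ) ::ₘ (u, φ) ::ₘ Γ) →
      SDer n k gR gG gS RA IA ((w, SFml.dia φ) ::ₘ Γ)
  | boxr {RA : RAt n} {IA : DAt n} {Γ : SSeq n} {w u : ℕ} {φ : SFml n} :
      ¬ soccurs u RA IA ((w, SFml.box φ) ::ₘ Γ) →
      SDer n k gR gG gS RA IA ((u, φ) ::ₘ Γ) →
      SDer n k gR gG gS RA IA ((w, SFml.box φ) ::ₘ Γ)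
  | aboxr {RA : RAt n} {IA : DAt n} {Γ : SSeq n} {w u : ℕ} {i : Fin (n + 1)}
      {φ : SFml n} :
      ¬ soccurs u RA IA ((w, SFml.abox i φ) ::ₘ Γ) →
      SDer n k gR gG gS ((i, w, u) ::ₘ RA) IA ((u, φ) ::ₘ Γ) →
      SDer n k gR gG gS RA IA ((w, SFml.abox i φ) ::ₘ Γ)
  | oblr {RA : RAt n} {IA : DAt n} {Γ : SSeq n} {w u : ℕ} {i : Fin (n + 1)}
      {φ : SFml n} :
      ¬ soccurs u RA IA ((w, SFml.obl i φ) ::ₘ Γ) →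
      SDer n k gR gG gS RA ((i, u) ::ₘ IA) ((u, φ) ::ₘ Γ) →
      SDer n k gR gG gS RA IA ((w, SFml.obl i φ) ::ₘ Γ)
  | ioa {RA : RAt n} {IA : DAt n} {Γ : SSeq n} (ws : Fin (n + 1) → ℕ) (u : ℕ) :
      ¬ soccurs u RA IA Γ →
      SDer n k gR gG gS ((Finset.univ.val.map fun i => (i, ws i, u)) + RA) IA Γ →
      SDer n k gR gG gS RA IA Γ
  | apc {RA : RAt n} {IA : DAt n} {Γ : SSeq n} (hk : 0 < k) (i : Fin (n + 1))
      (ws : Fin (k + 1) → ℕ) :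
      (∀ m j : Fin (k + 1), (m : ℕ) < (j : ℕ) →
        SDer n k gR gG gS ((i, ws m, ws j) ::ₘ RA) IA Γ) →
      SDer n k gR gG gS RA IA Γ
  | prAdia {RA : RAt n} {IA : DAt n} {Γ : SSeq n} {u v : ℕ} {i : Fin (n + 1)}
      {φ : SFml n} :
      gR → IPath RA i u v →
      SDer n k gR gG gS RA IA ((u, SFml.adia i φ) ::ₘ (v, φ) ::ₘ Γ) →
      SDer n k gR gG gS RA IA ((u, SFml.adia i φ) ::ₘ Γ)
  | prPer1 {RA : RAt n} {IA : DAt n} {Γ : SSeq n} {w u v : ℕ} {i : Fin (n + 1)}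
      {φ : SFml n} :
      gR → IPath RA i u v →
      SDer n k gR gG gS RA ((i, u) ::ₘ IA) ((w, SFml.per i φ) ::ₘ (v, φ) ::ₘ Γ) →
      SDer n k gR gG gS RA ((i, u) ::ₘ IA) ((w, SFml.per i φ) ::ₘ Γ)
  | prPer2 {RA : RAt n} {IA : DAt n} {Γ : SSeq n} {w u : ℕ} {i : Fin (n + 1)}
      {φ : SFml n} :
      gR → ¬ soccurs u RA IA ((w, SFml.per i φ) ::ₘ Γ) →
      SDer n k gR gG gS RA ((i, u) ::ₘ IA) ((w, SFml.per i φ) ::ₘ (u, φ) ::ₘ Γ) →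
      SDer n k gR gG gS RA IA ((w, SFml.per i φ) ::ₘ Γ)
  | adiar {RA : RAt n} {IA : DAt n} {Γ : SSeq n} {w u : ℕ} {i : Fin (n + 1)}
      {φ : SFml n} :
      gG →
      SDer n k gR gG gS ((i, w, u) ::ₘ RA) IA
        ((w, SFml.adia i φ) ::ₘ (u, φ) ::ₘ Γ) →
      SDer n k gR gG gS ((i, w, u) ::ₘ RA) IA ((w, SFml.adia i φ) ::ₘ Γ)
  | operr {RA : RAt n} {IA : DAt n} {Γ : SSeq n} {w u : ℕ} {i : Fin (n + 1)}
      {φ : SFml n} :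
      gG →
      SDer n k gR gG gS RA ((i, u) ::ₘ IA) ((w, SFml.per i φ) ::ₘ (u, φ) ::ₘ Γ) →
      SDer n k gR gG gS RA ((i, u) ::ₘ IA) ((w, SFml.per i φ) ::ₘ Γ)
  | refl {RA : RAt n} {IA : DAt n} {Γ : SSeq n} {w : ℕ} {i : Fin (n + 1)} :
      gG → SDer n k gR gG gS ((i, w, w) ::ₘ RA) IA Γ →
      SDer n k gR gG gS RA IA Γ
  | euc {RA : RAt n} {IA : DAt n} {Γ : SSeq n} {w u v : ℕ} {i : Fin (n + 1)} :
      gG →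
      SDer n k gR gG gS ((i, w, u) ::ₘ (i, w, v) ::ₘ (i, u, v) ::ₘ RA) IA Γ →
      SDer n k gR gG gS ((i, w, u) ::ₘ (i, w, v) ::ₘ RA) IA Γ
  | d2 {RA : RAt n} {IA : DAt n} {Γ : SSeq n} {u : ℕ} {i : Fin (n + 1)} :
      gG → ¬ soccurs u RA IA Γ →
      SDer n k gR gG gS RA ((i, u) ::ₘ IA) Γ →
      SDer n k gR gG gS RA IA Γ
  | d3 {RA : RAt n} {IA : DAt n} {Γ : SSeq n} {w u : ℕ} {i : Fin (n + 1)} :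
      gG →
      SDer n k gR gG gS ((i, w, u) ::ₘ RA) ((i, w) ::ₘ (i, u) ::ₘ IA) Γ →
      SDer n k gR gG gS ((i, w, u) ::ₘ RA) ((i, w) ::ₘ IA) Γ
  | subst {RA : RAt n} {IA : DAt n} {Γ : SSeq n} (w u : ℕ) :
      gS → SDer n k gR gG gS RA IA Γ →
      SDer n k gR gG gS (substRAt w u RA) (substDAt w u IA) (substSSeq w u Γ)
  | wk {RA RA' : RAt n} {IA IA' : DAt n} {Γ Γ' : SSeq n} :
      gS → SDer n k gR gG gS RA IA Γ →
      SDer n k gR gG gS (RA + RA') (IA + IA') (Γ + Γ')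
  | ctrR {RA : RAt n} {IA : DAt n} {Γ : SSeq n} (a : Fin (n + 1) × ℕ × ℕ) :
      gS → SDer n k gR gG gS (a ::ₘ a ::ₘ RA) IA Γ →
      SDer n k gR gG gS (a ::ₘ RA) IA Γ
  | ctrI {RA : RAt n} {IA : DAt n} {Γ : SSeq n} (b : Fin (n + 1) × ℕ) :
      gS → SDer n k gR gG gS RA (b ::ₘ b ::ₘ IA) Γ →
      SDer n k gR gG gS RA (b ::ₘ IA) Γ
  | ctrF {RA : RAt n} {IA : DAt n} {Γ : SSeq n} (w : ℕ) (φ : SFml n) :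
      gS → SDer n k gR gG gS RA IA ((w, φ) ::ₘ (w, φ) ::ₘ Γ) →
      SDer n k gR gG gS RA IA ((w, φ) ::ₘ Γ)
  | cut {RA : RAt n} {IA : DAt n} {Γ : SSeq n} (w : ℕ) (φ : SFml n) :
      gS → SDer n k gR gG gS RA IA ((w, φ) ::ₘ Γ) →
      SDer n k gR gG gS RA IA ((w, SFml.negnnf φ) ::ₘ Γ) →
      SDer n k gR gG gS RA IA Γ

/-- The labelled calculus `G3DS_n^k`. -/
abbrev G3DS (n k : ℕ) : RAt n → DAt n → SSeq n → Prop := SDer n k False True False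

/-- The refined labelled calculus `DS_n^k L`. -/
abbrev DSL (n k : ℕ) : RAt n → DAt n → SSeq n → Prop := SDer n k True False False

/-- The calculus `DS_n^k L + Str(DS)`. -/
abbrev DSLStr (n k : ℕ) : RAt n → DAt n → SSeq n → Prop := SDer n k True False True

/-!
Eliminating the rules of `G3DS_n^k` comes down to one simulation theorem. A sequent `T` *covers*
`w : φ` if `w : φ` occurs in `T` or `T` contains what remains of `w : φ` once invertible rules have
been applied to it. If `T` contains, up to a relabelling, covers of all formulae of a
`DS_n^k L`-derivable sequent, paths for all its relational atoms and path-connected ideal labels for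
all its deontic atoms, then the derivation can be replayed on `T`: a rule whose principal formula
has already been decomposed in `T` is skipped. This gives renaming, weakening, contraction and
inversion simultaneously, and hence `(ref_i)`, `(euc_i)` and `(D3^i)`, because undirected paths form
an equivalence relation.

For `(D2^i)` the derivation is replayed without the atom `I_{⊗_i} u`, which is missed only when some
`w : ⊖_i φ` is present. There `(Pr_⊖i²)` supplies a fresh ideal label `x`, and the whole derivation
is replayed from its root with `x` in place of `u`.
-/

namespace IPath

variable {n : ℕ} {RA RA' : RAt n} {i : Fin (n + 1)} {a b c : ℕ}

theorem trans (hab : IPath RA i a b) (hbc : IPath RA i b c) : IPath RA i a c := by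
  induction hab with
  | refl _ => exact hbc
  | fwd hm _ ih => exact .fwd hm (ih hbc)
  | bwd hm _ ih => exact .bwd hm (ih hbc)

theorem single (h : (i, a, b) ∈ RA) : IPath RA i a b := .fwd h (.refl _)

theorem symm (h : IPath RA i a b) : IPath RA i b a := by
  induction h with
  | refl _ => exact .refl _
  | fwd hm _ ih => exact ih.trans (.bwd hm (.refl _))
  | bwd hm _ ih => exact ih.trans (.single hm)

theorem map {f : ℕ → ℕ} (hf : ∀ w u, (i, w, u) ∈ RA → IPath RA' i (f w) (f u))
    (h : IPath RA i a b) : IPath RA' i (f a) (f b) := by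
  induction h with
  | refl _ => exact .refl _
  | fwd hm _ ih => exact (hf _ _ hm).trans ih
  | bwd hm _ ih => exact (hf _ _ hm).symm.trans ih

end IPath

section Occurrence

variable {n : ℕ} {RA : RAt n} {IA : DAt n} {Γ : SSeq n} {u w : ℕ} {φ : SFml n}

theorem ne_of_not_soccurs_cons (hu : ¬ soccurs u RA IA ((w, φ) ::ₘ Γ)) : w ≠ u := by
  rintro rfl
  exact hu (.inr (.inr ⟨φ, Multiset.mem_cons_self _ _⟩))

theorem exists_not_soccurs (RA : RAt n) (IA : DAt n) (Γ : SSeq n) :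
    ∃ u, ¬ soccurs u RA IA Γ := by
  obtain ⟨u, hu⟩ := Infinite.exists_notMem_finset
    (RA.map (·.2.1) + RA.map (·.2.2) + IA.map (·.2) + Γ.map (·.1)).toFinset
  refine ⟨u, fun h => hu ?_⟩
  simp only [Multiset.mem_toFinset, Multiset.mem_add, Multiset.mem_map]
  rcases h with ⟨i, w, v, hm, rfl | rfl⟩ | ⟨i, hm⟩ | ⟨φ, hm⟩
  · exact .inl (.inl (.inl ⟨_, hm, rfl⟩))
  · exact .inl (.inl (.inr ⟨_, hm, rfl⟩))
  · exact .inl (.inr ⟨_, hm, rfl⟩)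
  · exact .inr ⟨_, hm, rfl⟩

end Occurrence

/-- Labelled sequents `R ⊢ Γ`, with the relational atoms, the deontic atoms and the labelled
formulae bundled together. -/
structure Sequent (n : ℕ) where
  rel : RAt n
  deon : DAt n
  fml : SSeq n

/-- Derivability of a bundled sequent in `DS_n^k L`. -/
abbrev Sequent.Derivable {n : ℕ} (k : ℕ) (S : Sequent n) : Prop :=
  DSL n k S.rel S.deon S.fml

/-- The label `x` is ideal for agent `i`: it is linked to a deontic atom `I_{⊗_i} v` by an
`i`-path. -/
def Sequent.IsIdeal {n : ℕ} (S : Sequent n) (i : Fin (n + 1)) (x : ℕ) : Prop :=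
  ∃ v, (i, v) ∈ S.deon ∧ IPath S.rel i v x

/-- The sequent `S` covers `w : φ`: the formula occurs in `S`, or enough of its decomposition under
the invertible rules `(∨r)`, `(∧r)`, `(□)`, `([i])`, `(⊗_i)` occurs there, with arbitrary suitable
labels in place of the eigenlabels. The formulae `◇φ`, `⟨i⟩φ` and `⊖_i φ`, which their rules retain
as principal formulae, are covered only by occurring. -/
inductive Sequent.Covers {n : ℕ} (S : Sequent n) : ℕ → SFml n → Prop
  | mem {w : ℕ} {φ : SFml n} : (w, φ) ∈ S.fml → S.Covers w φ
  | or {w : ℕ} {φ ψ : SFml n} : S.Covers w φ → S.Covers w ψ → S.Covers w (.or φ ψ)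
  | andLeft {w : ℕ} {φ ψ : SFml n} : S.Covers w φ → S.Covers w (.and φ ψ)
  | andRight {w : ℕ} {φ ψ : SFml n} : S.Covers w ψ → S.Covers w (.and φ ψ)
  | box {w u : ℕ} {φ : SFml n} : S.Covers u φ → S.Covers w (.box φ)
  | abox {w u : ℕ} {i : Fin (n + 1)} {φ : SFml n} :
      IPath S.rel i w u → S.Covers u φ → S.Covers w (.abox i φ)
  | obl {w u : ℕ} {i : Fin (n + 1)} {φ : SFml n} :
      S.IsIdeal i u → S.Covers u φ → S.Covers w (.obl i φ)

/-- `S` is simulated by `T` along the relabelling `f`. The deontic atoms of the agents in `J` are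
exempt. -/
structure Sim {n : ℕ} (J : Set (Fin (n + 1))) (f : ℕ → ℕ) (S T : Sequent n) : Prop where
  path : ∀ i w u, (i, w, u) ∈ S.rel → IPath T.rel i (f w) (f u)
  isIdeal : ∀ i u, (i, u) ∈ S.deon → i ∉ J → T.IsIdeal i (f u)
  covers : ∀ w φ, (w, φ) ∈ S.fml → T.Covers (f w) φ

/-- `S ≤ T` if `T` simulates `S` without relabelling and without exempt agents. -/
instance {n : ℕ} : LE (Sequent n) := ⟨Sim ∅ fun w => w⟩

section Simulation

variable {n : ℕ} {J : Set (Fin (n + 1))} {f : ℕ → ℕ} {S T T' : Sequent n}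
  {RA RA' : RAt n} {IA IA' : DAt n} {Γ Γ' : SSeq n} {i : Fin (n + 1)} {w u : ℕ} {φ : SFml n}

theorem IPath.mono (hST : S ≤ T) (h : IPath S.rel i w u) : IPath T.rel i w u :=
  h.map (f := fun w => w) (hST.path i)

theorem Sequent.IsIdeal.of_path (hw : S.IsIdeal i w) (hwu : IPath S.rel i w u) : S.IsIdeal i u := by
  obtain ⟨v, hv, hvw⟩ := hw
  exact ⟨v, hv, hvw.trans hwu⟩

theorem Sequent.IsIdeal.mono (hST : S ≤ T) (h : S.IsIdeal i u) : T.IsIdeal i u := by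
  obtain ⟨v, hv, hvu⟩ := h
  obtain ⟨y, hy, hyv⟩ := hST.isIdeal i v hv (Set.notMem_empty i)
  exact .of_path ⟨y, hy, hyv⟩ (hvu.mono hST)

theorem Sequent.Covers.mono (hST : S ≤ T) (h : S.Covers w φ) : T.Covers w φ := by
  induction h with
  | mem hm => exact hST.covers _ _ hm
  | or _ _ ihφ ihψ => exact .or ihφ ihψ
  | andLeft _ ih => exact .andLeft ih
  | andRight _ ih => exact .andRight ih
  | box _ ih => exact .box ih
  | abox hp _ ih => exact .abox (hp.mono hST) ih
  | obl hi _ ih => exact .obl (hi.mono hST) ih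

theorem Sequent.le_of_subset (hR : RA ⊆ RA') (hI : IA ⊆ IA') (hΓ : Γ ⊆ Γ') :
    (⟨RA, IA, Γ⟩ : Sequent n) ≤ ⟨RA', IA', Γ'⟩ where
  path _ _ _ h := .single (hR h)
  isIdeal _ u h _ := ⟨u, hI h, .refl u⟩
  covers _ _ h := .mem (hΓ h)

namespace Sim

theorem trans_le (s : Sim J f S T) (hTT' : T ≤ T') : Sim J f S T' where
  path i w u h := (s.path i w u h).mono hTT'
  isIdeal i u h hi := (s.isIdeal i u h hi).mono hTT'
  covers w φ h := (s.covers w φ h).mono hTT'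

theorem mono_exempt {J' : Set (Fin (n + 1))} (hJ : J ⊆ J') (s : Sim J f S T) : Sim J' f S T where
  path := s.path
  isIdeal i u h hi := s.isIdeal i u h fun hi' => hi (hJ hi')
  covers := s.covers

theorem congr {g : ℕ → ℕ} (s : Sim J f S T)
    (hfg : ∀ v, soccurs v S.rel S.deon S.fml → f v = g v) : Sim J g S T where
  path i w u h := by
    rw [← hfg w (.inl ⟨i, w, u, h, .inl rfl⟩), ← hfg u (.inl ⟨i, w, u, h, .inr rfl⟩)]
    exact s.path i w u h
  isIdeal i u h := hfg u (.inr (.inl ⟨i, h⟩)) ▸ s.isIdeal i u h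
  covers w φ h := hfg w (.inr (.inr ⟨φ, h⟩)) ▸ s.covers w φ h

theorem update (s : Sim J f S T) (hu : ¬ soccurs u S.rel S.deon S.fml) (x : ℕ) :
    Sim J (Function.update f u x) S T :=
  s.congr fun v hv => (Function.update_of_ne (by rintro rfl; exact hu hv) x f).symm

theorem head (s : Sim J f ⟨RA, IA, (w, φ) ::ₘ Γ⟩ T) : T.Covers (f w) φ :=
  s.covers w φ (Multiset.mem_cons_self _ _)

theorem tail (s : Sim J f ⟨RA, IA, (w, φ) ::ₘ Γ⟩ T) : Sim J f ⟨RA, IA, Γ⟩ T where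
  path := s.path
  isIdeal := s.isIdeal
  covers v ψ h := s.covers v ψ (Multiset.mem_cons_of_mem h)

theorem cons_fml (s : Sim J f ⟨RA, IA, Γ⟩ T) (hw : T.Covers (f w) φ) :
    Sim J f ⟨RA, IA, (w, φ) ::ₘ Γ⟩ T where
  path := s.path
  isIdeal := s.isIdeal
  covers v ψ h := by
    obtain ⟨rfl, rfl⟩ | h := by simpa using h
    exacts [hw, s.covers v ψ h]

theorem cons_rel (s : Sim J f ⟨RA, IA, Γ⟩ T) (hwu : IPath T.rel i (f w) (f u)) :
    Sim J f ⟨(i, w, u) ::ₘ RA, IA, Γ⟩ T where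
  path j a b h := by
    obtain ⟨rfl, rfl, rfl⟩ | h := by simpa using h
    exacts [hwu, s.path j a b h]
  isIdeal := s.isIdeal
  covers := s.covers

theorem cons_deon (s : Sim J f ⟨RA, IA, Γ⟩ T) (hu : i ∉ J → T.IsIdeal i (f u)) :
    Sim J f ⟨RA, (i, u) ::ₘ IA, Γ⟩ T where
  path := s.path
  isIdeal j a h := by
    obtain ⟨rfl, rfl⟩ | h := by simpa using h
    exacts [hu, s.isIdeal j a h]
  covers := s.covers

theorem cons_cons_fml {v : ℕ} {ψ : SFml n} (s : Sim J f ⟨RA, IA, (w, φ) ::ₘ Γ⟩ T)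
    (hv : T.Covers (f v) ψ) : Sim J f ⟨RA, IA, (w, φ) ::ₘ (v, ψ) ::ₘ Γ⟩ T :=
  (s.tail.cons_fml hv).cons_fml s.head

theorem update_cons_fml {x : ℕ} {ψ : SFml n} (s : Sim J f ⟨RA, IA, (w, φ) ::ₘ Γ⟩ T)
    (hu : ¬ soccurs u RA IA ((w, φ) ::ₘ Γ)) (hx : T.Covers x ψ) :
    Sim J (Function.update f u x) ⟨RA, IA, (u, ψ) ::ₘ Γ⟩ T :=
  (s.update hu x).tail.cons_fml (by rwa [Function.update_self])

theorem add_ioa_rel {ws : Fin (n + 1) → ℕ} (s : Sim J f ⟨RA, IA, Γ⟩ T)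
    (h : ∀ i, IPath T.rel i (f (ws i)) (f u)) :
    Sim J f ⟨(Finset.univ.val.map fun i => (i, ws i, u)) + RA, IA, Γ⟩ T where
  path j a b hm := by
    rcases Multiset.mem_add.1 hm with hm | hm
    · obtain ⟨i, -, hi⟩ := Multiset.mem_map.1 hm
      cases hi
      exact h j
    · exact s.path j a b hm
  isIdeal := s.isIdeal
  covers := s.covers

end Sim

instance : Preorder (Sequent n) where
  le_refl _ := Sequent.le_of_subset (.refl _) (.refl _) (.refl _)
  le_trans _ _ _ := Sim.trans_le

end Simulation

namespace Sequent

variable {n k : ℕ} {S : Sequent n} {i : Fin (n + 1)} {w v : ℕ} {φ ψ : SFml n}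

theorem exists_eq_cons_of_mem (h : (w, φ) ∈ S.fml) :
    ∃ RA IA Γ, S = ⟨RA, IA, (w, φ) ::ₘ Γ⟩ := by
  obtain ⟨Γ, hΓ⟩ := Multiset.exists_cons_of_mem h
  exact ⟨S.rel, S.deon, Γ, hΓ ▸ rfl⟩

theorem derivable_of_covers_pos_neg {p : ℕ} (hpos : S.Covers w (.pos p))
    (hneg : S.Covers w (.neg p)) : S.Derivable k := by
  cases hpos with | mem hpos => cases hneg with | mem hneg =>
  obtain ⟨RA, IA, Γ, rfl⟩ := exists_eq_cons_of_mem hpos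
  obtain ⟨Δ, rfl⟩ : ∃ Δ, Γ = (w, .neg p) ::ₘ Δ := Multiset.exists_cons_of_mem (by simpa using hneg)
  exact .id RA IA Δ w p

theorem derivable_of_covers_or (h : S.Covers w (.or φ ψ))
    (H : ∀ T ≥ S, T.Covers w φ → T.Covers w ψ → T.Derivable k) : S.Derivable k := by
  cases h with
  | mem h =>
    obtain ⟨RA, IA, Γ, rfl⟩ := exists_eq_cons_of_mem h
    let T : Sequent n := ⟨RA, IA, (w, φ) ::ₘ (w, ψ) ::ₘ Γ⟩
    have hφ : T.Covers w φ := .mem (by simp [T])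
    have hψ : T.Covers w ψ := .mem (by simp [T])
    have hΓ : ⟨RA, IA, Γ⟩ ≤ T := le_of_subset (.refl _) (.refl _) fun _ h => by simp [h]
    exact .orr (H T (hΓ.cons_fml (.or hφ hψ)) hφ hψ)
  | or hφ hψ => exact H S le_rfl hφ hψ

theorem derivable_of_covers_and (h : S.Covers w (.and φ ψ))
    (Hφ : ∀ T ≥ S, T.Covers w φ → T.Derivable k)
    (Hψ : ∀ T ≥ S, T.Covers w ψ → T.Derivable k) : S.Derivable k := by
  cases h with
  | mem h =>
    obtain ⟨RA, IA, Γ, rfl⟩ := exists_eq_cons_of_mem h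
    have hχ (χ : SFml n) : (⟨RA, IA, (w, χ) ::ₘ Γ⟩ : Sequent n).Covers w χ := .mem (by simp)
    have hΓ (χ : SFml n) : (⟨RA, IA, Γ⟩ : Sequent n) ≤ ⟨RA, IA, (w, χ) ::ₘ Γ⟩ :=
      le_of_subset (.refl _) (.refl _) (Multiset.subset_cons _ _)
    exact .andr (Hφ _ ((hΓ φ).cons_fml (.andLeft (hχ φ))) (hχ φ))
      (Hψ _ ((hΓ ψ).cons_fml (.andRight (hχ ψ))) (hχ ψ))
  | andLeft hφ => exact Hφ S le_rfl hφ
  | andRight hψ => exact Hψ S le_rfl hψ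

theorem derivable_of_covers_box (h : S.Covers w (.box φ))
    (H : ∀ T ≥ S, ∀ x, T.Covers x φ → T.Derivable k) : S.Derivable k := by
  cases h with
  | mem h =>
    obtain ⟨RA, IA, Γ, rfl⟩ := exists_eq_cons_of_mem h
    obtain ⟨x, hx⟩ := exists_not_soccurs RA IA ((w, .box φ) ::ₘ Γ)
    let T : Sequent n := ⟨RA, IA, (x, φ) ::ₘ Γ⟩
    have hφ : T.Covers x φ := .mem (by simp [T])
    have hΓ : ⟨RA, IA, Γ⟩ ≤ T := le_of_subset (.refl _) (.refl _) (Multiset.subset_cons _ _)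
    exact .boxr hx (H T (hΓ.cons_fml (.box hφ)) x hφ)
  | @box _ x _ hx => exact H S le_rfl x hx

theorem derivable_of_covers_abox (h : S.Covers w (.abox i φ))
    (H : ∀ T ≥ S, ∀ x, IPath T.rel i w x → T.Covers x φ → T.Derivable k) : S.Derivable k := by
  cases h with
  | mem h =>
    obtain ⟨RA, IA, Γ, rfl⟩ := exists_eq_cons_of_mem h
    obtain ⟨x, hx⟩ := exists_not_soccurs RA IA ((w, .abox i φ) ::ₘ Γ)
    let T : Sequent n := ⟨(i, w, x) ::ₘ RA, IA, (x, φ) ::ₘ Γ⟩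
    have hφ : T.Covers x φ := .mem (by simp [T])
    have hwx : IPath T.rel i w x := .single (Multiset.mem_cons_self _ _)
    have hΓ : ⟨RA, IA, Γ⟩ ≤ T :=
      le_of_subset (Multiset.subset_cons _ _) (.refl _) (Multiset.subset_cons _ _)
    exact .aboxr hx (H T (hΓ.cons_fml (.abox hwx hφ)) x hwx hφ)
  | @abox _ x _ _ hwx hx => exact H S le_rfl x hwx hx

theorem derivable_of_covers_obl (h : S.Covers w (.obl i φ))
    (H : ∀ T ≥ S, ∀ x, T.IsIdeal i x → T.Covers x φ → T.Derivable k) : S.Derivable k := by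
  cases h with
  | mem h =>
    obtain ⟨RA, IA, Γ, rfl⟩ := exists_eq_cons_of_mem h
    obtain ⟨x, hx⟩ := exists_not_soccurs RA IA ((w, .obl i φ) ::ₘ Γ)
    let T : Sequent n := ⟨RA, (i, x) ::ₘ IA, (x, φ) ::ₘ Γ⟩
    have hφ : T.Covers x φ := .mem (by simp [T])
    have hix : T.IsIdeal i x := ⟨x, Multiset.mem_cons_self _ _, .refl x⟩
    have hΓ : ⟨RA, IA, Γ⟩ ≤ T :=
      le_of_subset (.refl _) (Multiset.subset_cons _ _) (Multiset.subset_cons _ _)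
    exact .oblr hx (H T (hΓ.cons_fml (.obl hix hφ)) x hix hφ)
  | @obl _ x _ _ hix hx => exact H S le_rfl x hix hx

theorem le_cons_cons (RA : RAt n) (IA : DAt n) (Γ : SSeq n) (a b : ℕ × SFml n) :
    (⟨RA, IA, a ::ₘ Γ⟩ : Sequent n) ≤ ⟨RA, IA, a ::ₘ b ::ₘ Γ⟩ :=
  le_of_subset (.refl _) (.refl _) (Multiset.cons_subset_cons (Multiset.subset_cons _ _))

theorem derivable_of_covers_dia (h : S.Covers w (.dia φ))
    (H : ∀ T ≥ S, T.Covers v φ → T.Derivable k) : S.Derivable k := by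
  cases h with | mem h =>
  obtain ⟨RA, IA, Γ, rfl⟩ := exists_eq_cons_of_mem h
  exact .diar (H _ (le_cons_cons RA IA Γ _ (v, φ)) (.mem (by simp)))

theorem derivable_of_covers_adia (h : S.Covers w (.adia i φ)) (hwv : IPath S.rel i w v)
    (H : ∀ T ≥ S, T.Covers v φ → T.Derivable k) : S.Derivable k := by
  cases h with | mem h =>
  obtain ⟨RA, IA, Γ, rfl⟩ := exists_eq_cons_of_mem h
  exact .prAdia trivial hwv (H _ (le_cons_cons RA IA Γ _ (v, φ)) (.mem (by simp)))

theorem derivable_of_covers_per (h : S.Covers w (.per i φ)) (hv : S.IsIdeal i v)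
    (H : ∀ T ≥ S, T.Covers v φ → T.Derivable k) : S.Derivable k := by
  cases h with | mem h =>
  obtain ⟨RA, IA, Γ, rfl⟩ := exists_eq_cons_of_mem h
  obtain ⟨u, hu, huv⟩ := hv
  obtain ⟨IA, rfl⟩ : ∃ IA', IA = (i, u) ::ₘ IA' := Multiset.exists_cons_of_mem hu
  exact .prPer1 trivial huv (H _ (le_cons_cons RA _ Γ _ (v, φ)) (.mem (by simp)))

theorem derivable_of_covers_per_of_forall_isIdeal (h : S.Covers w (.per i φ))
    (H : ∀ T ≥ S, ∀ x, T.IsIdeal i x → T.Covers x φ → T.Derivable k) : S.Derivable k := by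
  cases h with | mem h =>
  obtain ⟨RA, IA, Γ, rfl⟩ := exists_eq_cons_of_mem h
  obtain ⟨x, hx⟩ := exists_not_soccurs RA IA ((w, .per i φ) ::ₘ Γ)
  have hle : (⟨RA, IA, (w, .per i φ) ::ₘ Γ⟩ : Sequent n) ≤
      ⟨RA, (i, x) ::ₘ IA, (w, .per i φ) ::ₘ (x, φ) ::ₘ Γ⟩ :=
    le_of_subset (.refl _) (Multiset.subset_cons _ _)
      (Multiset.cons_subset_cons (Multiset.subset_cons _ _))
  exact .prPer2 trivial hx
    (H _ hle x ⟨x, Multiset.mem_cons_self _ _, .refl x⟩ (.mem (by simp)))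

-- `ws` depends on `x` because `(IOA)` does not forbid a `w_i` to be the eigenlabel itself.
theorem derivable_of_ioa (ws : ℕ → Fin (n + 1) → ℕ)
    (H : ∀ T ≥ S, ∀ x, (∀ i, IPath T.rel i (ws x i) x) → T.Derivable k) : S.Derivable k := by
  obtain ⟨x, hx⟩ := exists_not_soccurs S.rel S.deon S.fml
  refine .ioa (ws x) x hx (H ⟨_, S.deon, S.fml⟩ ?_ x fun i => .single ?_)
  · exact le_of_subset (Multiset.subset_of_le (Multiset.le_add_left _ _)) (.refl _) (.refl _)
  · exact Multiset.mem_add.2 (.inl (Multiset.mem_map_of_mem _ (Finset.mem_univ i)))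

theorem derivable_of_apc (hk : 0 < k) (ws : Fin (k + 1) → ℕ)
    (H : ∀ T ≥ S, ∀ m j : Fin (k + 1), m < j → IPath T.rel i (ws m) (ws j) → T.Derivable k) :
    S.Derivable k :=
  .apc hk i ws fun m j hmj => H ⟨(i, ws m, ws j) ::ₘ S.rel, S.deon, S.fml⟩
    (le_of_subset (Multiset.subset_cons _ _) (.refl _) (.refl _)) m j hmj
    (.single (Multiset.mem_cons_self _ _))

end Sequent

open Sequent

section Admissibility

variable {n k : ℕ} {RA : RAt n} {IA : DAt n} {Γ : SSeq n} {i : Fin (n + 1)} {w u v : ℕ}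

/-- A missing deontic atom of an exempt agent is noticed only at an application of `(Pr_⊖i¹)`, where
`hJ` derives the current target outright. The targets grow along the induction, so `hJ` ranges over
all sequents above a fixed `B`. -/
theorem derivable_of_sim_of_exempt {J : Set (Fin (n + 1))} {B : Sequent n}
    (hJ : ∀ T ≥ B, ∀ i ∈ J, ∀ w φ, T.Covers w (.per i φ) → T.Derivable k)
    (h : DSL n k RA IA Γ) {f : ℕ → ℕ} {T : Sequent n} (hBT : B ≤ T)
    (s : Sim J f ⟨RA, IA, Γ⟩ T) : T.Derivable k := by
  induction h generalizing f T with
  | id RA IA Γ w p => exact derivable_of_covers_pos_neg s.head s.tail.head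
  | orr _ ih =>
    exact derivable_of_covers_or s.head fun _ hT hφ hψ =>
      ih (hBT.trans hT) (((s.tail.trans_le hT).cons_fml hψ).cons_fml hφ)
  | andr _ _ ihφ ihψ =>
    exact derivable_of_covers_and s.head
      (fun _ hT hφ => ihφ (hBT.trans hT) ((s.tail.trans_le hT).cons_fml hφ))
      (fun _ hT hψ => ihψ (hBT.trans hT) ((s.tail.trans_le hT).cons_fml hψ))
  | diar _ ih =>
    exact derivable_of_covers_dia s.head fun _ hT hu =>
      ih (hBT.trans hT) ((s.trans_le hT).cons_cons_fml hu)
  | boxr hu _ ih =>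
    exact derivable_of_covers_box s.head fun _ hT _ hx =>
      ih (hBT.trans hT) ((s.trans_le hT).update_cons_fml hu hx)
  | aboxr hu _ ih =>
    exact derivable_of_covers_abox s.head fun _ hT _ hwx hx =>
      ih (hBT.trans hT) (((s.trans_le hT).update_cons_fml hu hx).cons_rel
        (by simpa [ne_of_not_soccurs_cons hu] using hwx))
  | oblr hu _ ih =>
    exact derivable_of_covers_obl s.head fun _ hT _ hix hx =>
      ih (hBT.trans hT) (((s.trans_le hT).update_cons_fml hu hx).cons_deon
        fun _ => by simpa using hix)
  | ioa ws u hu _ ih =>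
    exact derivable_of_ioa (fun x i => Function.update f u x (ws i)) fun _ hT x hx =>
      ih (hBT.trans hT) (((s.trans_le hT).update hu x).add_ioa_rel (by simpa using hx))
  | apc hk i ws _ ih =>
    exact derivable_of_apc hk (f ∘ ws) fun _ hT m j hmj hp =>
      ih m j hmj (hBT.trans hT) ((s.trans_le hT).cons_rel hp)
  | prAdia _ hp _ ih =>
    exact derivable_of_covers_adia s.head (hp.map (s.path _)) fun _ hT hv =>
      ih (hBT.trans hT) ((s.trans_le hT).cons_cons_fml hv)
  | @prPer1 _ _ _ _ _ _ i _ _ hp _ ih =>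
    by_cases hi : i ∈ J
    · exact hJ T hBT i hi _ _ s.head
    · have hIdeal := (s.isIdeal i _ (Multiset.mem_cons_self _ _) hi).of_path (hp.map (s.path i))
      exact derivable_of_covers_per s.head hIdeal fun _ hT hv =>
        ih (hBT.trans hT) ((s.trans_le hT).cons_cons_fml hv)
  | prPer2 _ hu _ ih =>
    exact derivable_of_covers_per_of_forall_isIdeal s.head fun _ hT x hix hx =>
      ih (hBT.trans hT) ((((s.trans_le hT).update hu x).cons_cons_fml (by simpa using hx)).cons_deon
        fun _ => by simpa using hix)
  | _ => contradiction

theorem derivable_of_sim {f : ℕ → ℕ} {T : Sequent n} (h : DSL n k RA IA Γ)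
    (s : Sim ∅ f ⟨RA, IA, Γ⟩ T) : T.Derivable k :=
  derivable_of_sim_of_exempt (fun _ _ i hi => absurd hi (Set.notMem_empty i)) h le_rfl s

theorem dsl_of_refl (h : DSL n k ((i, w, w) ::ₘ RA) IA Γ) : DSL n k RA IA Γ :=
  let T : Sequent n := ⟨RA, IA, Γ⟩
  derivable_of_sim h (Sim.cons_rel (le_refl T) (.refl w))

theorem dsl_of_euc (h : DSL n k ((i, w, u) ::ₘ (i, w, v) ::ₘ (i, u, v) ::ₘ RA) IA Γ) :
    DSL n k ((i, w, u) ::ₘ (i, w, v) ::ₘ RA) IA Γ := by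
  let T : Sequent n := ⟨(i, w, u) ::ₘ (i, w, v) ::ₘ RA, IA, Γ⟩
  have hwu : IPath T.rel i w u := .single (by simp [T])
  have hwv : IPath T.rel i w v := .single (by simp [T])
  have hT : ⟨RA, IA, Γ⟩ ≤ T := le_of_subset (fun _ h => by simp [h]) (.refl _) (.refl _)
  exact derivable_of_sim h (((hT.cons_rel (hwu.symm.trans hwv)).cons_rel hwv).cons_rel hwu)

theorem dsl_of_d3 (h : DSL n k ((i, w, u) ::ₘ RA) ((i, w) ::ₘ (i, u) ::ₘ IA) Γ) :
    DSL n k ((i, w, u) ::ₘ RA) ((i, w) ::ₘ IA) Γ := by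
  let T : Sequent n := ⟨(i, w, u) ::ₘ RA, (i, w) ::ₘ IA, Γ⟩
  have hw : T.IsIdeal i w := ⟨w, Multiset.mem_cons_self _ _, .refl w⟩
  have hu : T.IsIdeal i u := hw.of_path (.single (Multiset.mem_cons_self _ _))
  have hT : ⟨(i, w, u) ::ₘ RA, IA, Γ⟩ ≤ T :=
    le_of_subset (.refl _) (Multiset.subset_cons _ _) (.refl _)
  exact derivable_of_sim h ((hT.cons_deon fun _ => hu).cons_deon fun _ => hw)

theorem dsl_of_d2 (hu : ¬ soccurs u RA IA Γ) (h : DSL n k RA ((i, u) ::ₘ IA) Γ) :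
    DSL n k RA IA Γ := by
  let S : Sequent n := ⟨RA, IA, Γ⟩
  have of_isIdeal : ∀ T ≥ S, ∀ x, T.IsIdeal i x → T.Derivable k := fun T hT x hx =>
    derivable_of_sim h ((Sim.update hT hu x).cons_deon fun _ => by simpa using hx)
  have of_per : ∀ T ≥ S, ∀ j ∈ ({i} : Set (Fin (n + 1))), ∀ w φ,
      T.Covers w (.per j φ) → T.Derivable k := by
    rintro T hT j rfl w φ hw
    exact derivable_of_covers_per_of_forall_isIdeal hw fun T' hTT' x hx _ =>
      of_isIdeal T' (hT.trans hTT') x hx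
  have s : Sim {i} (fun w => w) ⟨RA, (i, u) ::ₘ IA, Γ⟩ S :=
    (Sim.mono_exempt (Set.empty_subset _) (le_refl S)).cons_deon fun hi => absurd rfl hi
  exact derivable_of_sim_of_exempt of_per h le_rfl s

end Admissibility

theorem g3DS_to_dsl_general {n k : ℕ} {gR gG : Prop} {RA : RAt n} {IA : DAt n} {Γ : SSeq n}
    (h : SDer n k gR gG False RA IA Γ) : DSL n k RA IA Γ := by
  induction h with
  | id RA IA Γ w p => exact .id RA IA Γ w p
  | orr _ ih => exact .orr ih
  | andr _ _ ihφ ihψ => exact .andr ihφ ihψ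
  | diar _ ih => exact .diar ih
  | boxr hu _ ih => exact .boxr hu ih
  | aboxr hu _ ih => exact .aboxr hu ih
  | oblr hu _ ih => exact .oblr hu ih
  | ioa ws u hu _ ih => exact .ioa ws u hu ih
  | apc hk i ws _ ih => exact .apc hk i ws ih
  | prAdia _ hp _ ih => exact .prAdia trivial hp ih
  | prPer1 _ hp _ ih => exact .prPer1 trivial hp ih
  | prPer2 _ hu _ ih => exact .prPer2 trivial hu ih
  | adiar _ _ ih => exact .prAdia trivial (.single (Multiset.mem_cons_self _ _)) ih
  | operr _ _ ih => exact .prPer1 trivial (.refl _) ih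
  | refl _ _ ih => exact dsl_of_refl ih
  | euc _ _ ih => exact dsl_of_euc ih
  | d2 _ hu _ ih => exact dsl_of_d2 hu ih
  | d3 _ _ ih => exact dsl_of_d3 ih
  | _ => contradiction

/-- For all `n, k ∈ ℕ`, every labelled sequent derivable in
the labelled calculus `G3DS_n^k` is derivable in the refined labelled calculus
`DS_n^k L`. -/
theorem g3DS_to_dsl (n k : ℕ) (RA : RAt n) (IA : DAt n) (Γ : SSeq n)
    (h : G3DS n k RA IA Γ) : DSL n k RA IA Γ :=
  g3DS_to_dsl_general h

end DeonticStit
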